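/- Fix λ > 0 and let y : (0,∞) → [0,∞) be a C¹ function with y′(z) = y(z)² − λ r(z)² for all z > 0, y(z) → 0 as z → ∞, and y integrable on (0,1). Then for every v > 0: λ ∫_0^∞ (1/ω(z)) exp{ −m(z) − ∫_0^{I(z)} y(s) ds } ( ∫_0^{z∧v} exp{ m(u) + 2∫_0^{I(u)} y(s) ds } du ) dz = exp{ ∫_0^{I(v)} y(s) ds } − 1. Consequently, if in addition ∫_0^∞ y(s) ds < ∞, then letting v → ∞ gives 1 + λ ∫_0^∞ (1/ω(z)) exp{ −m(z) − ∫_0^{I(z)} y(s) ds } ( ∫_0^{z} exp{ m(u) + 2∫_0^{I(u)} y(s) ds } du ) dz = exp{ ∫_0^∞ y(s) ds }. -/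

import Mathlib

open MeasureTheory Set

/-!
Put `P x = ∫₀ˣ y`. The Riccati equation `y' = y² - q` says exactly that
`(e^{-P} y)' = -q e^{-P}`, and since `y` vanishes at infinity, `∫ₛ^∞ q e^{-P} = e^{-P s} y s`.
Integrating this against `e^{2P s}` over `s ≤ v` and exchanging the integrals gives
`∫₀^∞ q x e^{-P x} ∫₀^{x ∧ v} e^{2P s} ds dx = ∫₀ᵛ e^{P} y = e^{P v} - 1`.
With `q = λ r²`, the substitution `x = I(z)` turns this into the stated identity, because
`r(I(z))² = e^{-2 m(z)} / ω(z)` and `I' = e^m`. The substitution requires `m` to be continuous,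
i.e. `ψ / ω` to be integrable at `0`; that is the content of the logarithmic moment of `μ`, as
`∫₀ᵀ (1 - e^{-ux}) / u du` grows like `log x`.
-/

open Filter Topology
open scoped Real

section Fubini

variable {α 𝕜 : Type*} [RCLike 𝕜] [TopologicalSpace α] [LinearOrder α] [OrderClosedTopology α]
  [SecondCountableTopology α] [MeasurableSpace α] [OpensMeasurableSpace α]
  {μ ν : Measure α} [SFinite μ] [SFinite ν]

theorem integral_mul_setIntegral_Iic {g h : α → 𝕜} (hg : AEStronglyMeasurable g μ)
    (hh : AEStronglyMeasurable h ν) (hg_Ici : ∀ᵐ u ∂ν, IntegrableOn g (Ici u) μ)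
    (hint : Integrable (fun u ↦ ‖h u‖ * ∫ z in Ici u, ‖g z‖ ∂μ) ν) :
    ∫ z, g z * ∫ u in Iic z, h u ∂ν ∂μ = ∫ u, h u * ∫ z in Ici u, g z ∂μ ∂ν := by
  set K : α × α → 𝕜 := {p | p.2 ≤ p.1}.indicator fun p ↦ g p.1 * h p.2 with hK
  have K_left (z : α) : (fun u ↦ K (z, u)) = (Iic z).indicator fun u ↦ g z * h u := by
    ext u; simp [hK, indicator]
  have K_right (u : α) : (fun z ↦ K (z, u)) = (Ici u).indicator fun z ↦ h u * g z := by
    ext z; simp [hK, indicator, mul_comm]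
  have K_norm (u : α) : (fun z ↦ ‖K (z, u)‖) = (Ici u).indicator fun z ↦ ‖h u‖ * ‖g z‖ := by
    ext z; simp [hK, indicator, apply_ite norm, mul_comm]
  have K_integrable : Integrable K (μ.prod ν) := by
    refine (integrable_prod_iff' ?_).2 ⟨?_, ?_⟩
    · exact (hg.comp_fst.mul hh.comp_snd).indicator
        (measurableSet_le measurable_snd measurable_fst)
    · filter_upwards [hg_Ici] with u hu
      rw [K_right, integrable_indicator_iff measurableSet_Ici]
      exact hu.const_mul _
    · simpa only [K_norm, integral_indicator measurableSet_Ici, integral_const_mul] using hint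
  calc ∫ z, g z * ∫ u in Iic z, h u ∂ν ∂μ = ∫ z, ∫ u, K (z, u) ∂ν ∂μ := by
        simp only [K_left, integral_indicator measurableSet_Iic, integral_const_mul]
    _ = ∫ u, ∫ z, K (z, u) ∂μ ∂ν := integral_integral_swap K_integrable
    _ = ∫ u, h u * ∫ z in Ici u, g z ∂μ ∂ν := by
        simp only [K_right, integral_indicator measurableSet_Ici, integral_const_mul]

end Fubini

lemma integrableOn_Ici_of_hasDerivAt_neg {u l : ℝ} {F g : ℝ → ℝ}
    (hF : ∀ z ∈ Ici u, HasDerivAt F (-g z) z) (hg : ∀ z ∈ Ioi u, 0 ≤ g z)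
    (hF_lim : Tendsto F atTop (𝓝 l)) : IntegrableOn g (Ici u) := by
  rw [integrableOn_Ici_iff_integrableOn_Ioi]
  simpa using (integrableOn_Ioi_deriv_of_nonpos' hF
    (fun z hz ↦ neg_nonpos.2 (hg z hz)) hF_lim).neg

lemma integral_Ici_of_hasDerivAt_neg {u l : ℝ} {F g : ℝ → ℝ}
    (hF : ∀ z ∈ Ici u, HasDerivAt F (-g z) z) (hg : ∀ z ∈ Ioi u, 0 ≤ g z)
    (hF_lim : Tendsto F atTop (𝓝 l)) : ∫ z in Ici u, g z = F u - l := by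
  have h := integral_Ioi_of_hasDerivAt_of_nonpos' hF
    (fun z hz ↦ neg_nonpos.2 (hg z hz)) hF_lim
  rw [integral_neg] at h
  rw [integral_Ici_eq_integral_Ioi]
  linarith

theorem integral_mul_setIntegral_Iic_of_hasDerivAt {a : ℝ} {A : Set ℝ} (hA : MeasurableSet A)
    (hA_sub : A ⊆ Ioi a) {F g h : ℝ → ℝ} (hF : ∀ z ∈ Ioi a, HasDerivAt F (-g z) z)
    (hg : ∀ z ∈ Ioi a, 0 ≤ g z) (hF_lim : Tendsto F atTop (𝓝 0))
    (hh : AEStronglyMeasurable h (volume.restrict A))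
    (hhF : IntegrableOn (fun u ↦ h u * F u) A) :
    ∫ z in Ioi a, g z * ∫ u in A ∩ Iic z, h u = ∫ u in A, h u * F u := by
  have Ici_sub {u : ℝ} (hu : u ∈ A) : Ici u ⊆ Ioi a := Ici_subset_Ioi.2 (hA_sub hu)
  have g_nonneg {u : ℝ} (hu : u ∈ A) : ∀ z ∈ Ici u, 0 ≤ g z := fun z hz ↦ hg z (Ici_sub hu hz)
  have g_integrable {u : ℝ} (hu : u ∈ A) : IntegrableOn g (Ici u) :=
    integrableOn_Ici_of_hasDerivAt_neg (fun z hz ↦ hF z (Ici_sub hu hz))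
      (fun z hz ↦ g_nonneg hu z (Ioi_subset_Ici_self hz)) hF_lim
  have g_tail {u : ℝ} (hu : u ∈ A) : ∫ z in Ici u, g z = F u := by
    simpa using integral_Ici_of_hasDerivAt_neg (fun z hz ↦ hF z (Ici_sub hu hz))
      (fun z hz ↦ g_nonneg hu z (Ioi_subset_Ici_self hz)) hF_lim
  have g_norm_tail {u : ℝ} (hu : u ∈ A) : ∫ z in Ici u, ‖g z‖ = ‖F u‖ := by
    rw [← g_tail hu, Real.norm_of_nonneg (setIntegral_nonneg measurableSet_Ici (g_nonneg hu))]
    exact setIntegral_congr_fun measurableSet_Ici fun z hz ↦ Real.norm_of_nonneg (g_nonneg hu z hz)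
  have g_meas : AEStronglyMeasurable g (volume.restrict (Ioi a)) :=
    (aestronglyMeasurable_deriv F _).neg.congr <|
      (ae_restrict_mem measurableSet_Ioi).mono fun z hz ↦ by simp [(hF z hz).deriv]
  have restrict_Ici {u : ℝ} (hu : u ∈ A) :
      (volume.restrict (Ioi a)).restrict (Ici u) = volume.restrict (Ici u) :=
    Measure.restrict_restrict_of_subset (Ici_sub hu)
  have exchange := integral_mul_setIntegral_Iic g_meas hh
    ((ae_restrict_mem hA).mono fun u hu ↦ (g_integrable hu).restrict)
    (hhF.norm.congr <| (ae_restrict_mem hA).mono fun u hu ↦ by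
      simp only [norm_mul, restrict_Ici hu, g_norm_tail hu])
  simp only [Measure.restrict_restrict measurableSet_Iic, inter_comm _ A] at exchange
  rw [exchange]
  exact setIntegral_congr_fun hA fun u hu ↦ by simp only [restrict_Ici hu, g_tail hu]


theorem continuousOn_primitive_Ici {E : Type*} [NormedAddCommGroup E] [NormedSpace ℝ E]
    {f : ℝ → E} {a : ℝ} (hf : ∀ t, a ≤ t → IntervalIntegrable f volume a t) :
    ContinuousOn (fun t ↦ ∫ s in a..t, f s) (Ici a) := by
  intro t ht
  have ht_lt : t < t + 1 := lt_add_one t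
  have h_Icc : ContinuousOn (fun t ↦ ∫ s in a..t, f s) (Icc a (t + 1)) := by
    have hat : a ≤ t + 1 := le_trans ht ht_lt.le
    rw [← uIcc_of_le hat]
    exact intervalIntegral.continuousOn_primitive_interval' (hf _ hat) left_mem_uIcc
  refine (h_Icc t ⟨ht, ht_lt.le⟩).mono_of_mem_nhdsWithin ?_
  rw [← Ici_inter_Iic]
  exact inter_mem_nhdsWithin _ (Iic_mem_nhds ht_lt)

theorem sigmaFinite_of_integrable_of_ae_ne_zero {α E : Type*} [MeasurableSpace α]
    [NormedAddCommGroup E] {μ : Measure α} {f : α → E} (hf : Integrable f μ)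
    (hf_ne : ∀ᵐ x ∂μ, f x ≠ 0) : SigmaFinite μ := by
  obtain ⟨t, _, hft, hσ⟩ := hf.aefinStronglyMeasurable.exists_set_sigmaFinite
  have ht_compl : μ tᶜ = 0 := by
    rw [← Measure.restrict_eq_zero, ← ae_eq_bot, ← empty_mem_iff_bot]
    filter_upwards [hft, ae_restrict_of_ae hf_ne] with x hx hx'
    exact hx' hx
  rwa [Measure.restrict_eq_self_of_ae_mem (mem_ae_iff.2 ht_compl)] at hσ

/-! ### Decaying solutions of Riccati equations -/

/-- `y` is a non-negative solution on `(0, ∞)` of the Riccati equation `y' = y² - q` that vanishes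
at infinity and is integrable at the origin. -/
structure IsDecayingRiccatiSolution (q y : ℝ → ℝ) : Prop where
  nonneg : ∀ x, 0 < x → 0 ≤ y x
  hasDerivAt : ∀ x, 0 < x → HasDerivAt y (y x ^ 2 - q x) x
  tendsto : Tendsto y atTop (𝓝 0)
  integrableOn : IntegrableOn y (Ioo 0 1)

namespace IsDecayingRiccatiSolution

variable {q y : ℝ → ℝ} (hy : IsDecayingRiccatiSolution q y)
include hy

lemma continuousOn : ContinuousOn y (Ioi 0) := fun x hx ↦
  (hy.hasDerivAt x hx).continuousAt.continuousWithinAt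

lemma intervalIntegrable {x : ℝ} (hx : 0 ≤ x) : IntervalIntegrable y volume 0 x := by
  rcases hx.eq_or_lt with rfl | hx
  · exact .refl
  · have h_one : IntervalIntegrable y volume 0 1 :=
      (intervalIntegrable_iff_integrableOn_Ioo_of_le zero_le_one).2 hy.integrableOn
    exact h_one.trans <| (hy.continuousOn.mono fun t ht ↦
      (lt_min one_pos hx).trans_le ht.1).intervalIntegrable

lemma primitive_nonneg {x : ℝ} (hx : 0 ≤ x) : 0 ≤ ∫ t in (0 : ℝ)..x, y t := by
  rw [intervalIntegral.integral_of_le hx]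
  exact setIntegral_nonneg measurableSet_Ioc fun t ht ↦ hy.nonneg t ht.1

lemma continuousOn_primitive : ContinuousOn (fun x ↦ ∫ t in (0 : ℝ)..x, y t) (Ici 0) :=
  continuousOn_primitive_Ici fun _ ↦ hy.intervalIntegrable

lemma hasDerivAt_primitive {x : ℝ} (hx : 0 < x) :
    HasDerivAt (fun x ↦ ∫ t in (0 : ℝ)..x, y t) (y x) x :=
  intervalIntegral.integral_hasDerivAt_right (hy.intervalIntegrable hx.le)
    (hy.continuousOn.stronglyMeasurableAtFilter isOpen_Ioi x hx)
    (hy.hasDerivAt x hx).continuousAt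

lemma hasDerivAt_exp_primitive {x : ℝ} (hx : 0 < x) :
    HasDerivAt (fun x ↦ Real.exp (∫ t in (0 : ℝ)..x, y t))
      (Real.exp (2 * ∫ t in (0 : ℝ)..x, y t) * (Real.exp (-∫ t in (0 : ℝ)..x, y t) * y x)) x := by
  refine (hy.hasDerivAt_primitive hx).exp.congr_deriv ?_
  rw [← mul_assoc, ← Real.exp_add]
  ring_nf

lemma hasDerivAt_exp_neg_primitive_mul {x : ℝ} (hx : 0 < x) :
    HasDerivAt (fun x ↦ Real.exp (-∫ t in (0 : ℝ)..x, y t) * y x)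
      (-(q x * Real.exp (-∫ t in (0 : ℝ)..x, y t))) x := by
  refine ((hy.hasDerivAt_primitive hx).fun_neg.exp.mul (hy.hasDerivAt x hx)).congr_deriv ?_
  ring

lemma exp_neg_primitive_mul_nonneg {x : ℝ} (hx : 0 < x) :
    0 ≤ Real.exp (-∫ t in (0 : ℝ)..x, y t) * y x :=
  mul_nonneg (Real.exp_nonneg _) (hy.nonneg x hx)

lemma tendsto_exp_neg_primitive_mul :
    Tendsto (fun x ↦ Real.exp (-∫ t in (0 : ℝ)..x, y t) * y x) atTop (𝓝 0) := by
  refine squeeze_zero' ?_ ?_ hy.tendsto <;> filter_upwards [eventually_gt_atTop 0] with x hx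
  · exact hy.exp_neg_primitive_mul_nonneg hx
  · exact mul_le_of_le_one_left (hy.nonneg x hx) <|
      Real.exp_le_one_iff.2 <| neg_nonpos.2 <| hy.primitive_nonneg hx.le

lemma integral_mul_setIntegral_Iic (hq : ∀ x, 0 < x → 0 ≤ q x) {A : Set ℝ} (hA : MeasurableSet A)
    (hA_pos : A ⊆ Ioi 0)
    (hint : IntegrableOn (fun s ↦ Real.exp (2 * ∫ t in (0 : ℝ)..s, y t) *
      (Real.exp (-∫ t in (0 : ℝ)..s, y t) * y s)) A) :
    ∫ x in Ioi 0, q x * Real.exp (-∫ t in (0 : ℝ)..x, y t) *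
        ∫ s in A ∩ Iic x, Real.exp (2 * ∫ t in (0 : ℝ)..s, y t) =
      ∫ s in A, Real.exp (2 * ∫ t in (0 : ℝ)..s, y t) *
        (Real.exp (-∫ t in (0 : ℝ)..s, y t) * y s) := by
  have hcont : ContinuousOn (fun s ↦ Real.exp (2 * ∫ t in (0 : ℝ)..s, y t)) A :=
    (continuousOn_const.mul hy.continuousOn_primitive).rexp.mono
      (hA_pos.trans Ioi_subset_Ici_self)
  exact integral_mul_setIntegral_Iic_of_hasDerivAt hA hA_pos
    (fun _ ↦ hy.hasDerivAt_exp_neg_primitive_mul)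
    (fun x hx ↦ mul_nonneg (hq x hx) (Real.exp_nonneg _))
    hy.tendsto_exp_neg_primitive_mul (hcont.aestronglyMeasurable hA) hint

theorem integral_mul_intervalIntegral_min (hq : ∀ x, 0 < x → 0 ≤ q x) {v : ℝ} (hv : 0 ≤ v) :
    ∫ x in Ioi 0, q x * Real.exp (-∫ t in (0 : ℝ)..x, y t) *
        ∫ s in (0 : ℝ)..min x v, Real.exp (2 * ∫ t in (0 : ℝ)..s, y t) =
      Real.exp (∫ t in (0 : ℝ)..v, y t) - 1 := by
  have hcont : ContinuousOn (fun x ↦ Real.exp (∫ t in (0 : ℝ)..x, y t)) (Icc 0 v) :=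
    hy.continuousOn_primitive.rexp.mono Icc_subset_Ici_self
  have hint := intervalIntegral.integrableOn_deriv_of_nonneg hcont
    (fun x hx ↦ hy.hasDerivAt_exp_primitive hx.1)
    (fun x hx ↦ mul_nonneg (Real.exp_nonneg _) (hy.exp_neg_primitive_mul_nonneg hx.1))
  have hval := intervalIntegral.integral_eq_sub_of_hasDerivAt_of_le hv hcont
    (fun x hx ↦ hy.hasDerivAt_exp_primitive hx.1)
    ((intervalIntegrable_iff_integrableOn_Ioc_of_le hv).2 hint)
  rw [intervalIntegral.integral_of_le hv, ← hy.integral_mul_setIntegral_Iic hq measurableSet_Ioc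
    Ioc_subset_Ioi_self hint, intervalIntegral.integral_same, Real.exp_zero] at hval
  rw [← hval]
  refine setIntegral_congr_fun measurableSet_Ioi fun x hx ↦ ?_
  rw [Ioc_inter_Iic, min_comm x v, intervalIntegral.integral_of_le (le_min hv hx.le)]

theorem integral_mul_intervalIntegral (hq : ∀ x, 0 < x → 0 ≤ q x)
    (hy_int : IntegrableOn y (Ioi 0)) :
    ∫ x in Ioi 0, q x * Real.exp (-∫ t in (0 : ℝ)..x, y t) *
        ∫ s in (0 : ℝ)..x, Real.exp (2 * ∫ t in (0 : ℝ)..s, y t) =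
      Real.exp (∫ t in Ioi 0, y t) - 1 := by
  have hlim : Tendsto (fun x ↦ Real.exp (∫ t in (0 : ℝ)..x, y t)) atTop
      (𝓝 (Real.exp (∫ t in Ioi 0, y t))) :=
    (intervalIntegral_tendsto_integral_Ioi 0 hy_int tendsto_id).rexp
  have hcont := hy.continuousOn_primitive.rexp 0 self_mem_Ici
  have hderiv_nonneg : ∀ x ∈ Ioi (0 : ℝ), 0 ≤ Real.exp (2 * ∫ t in (0 : ℝ)..x, y t) *
      (Real.exp (-∫ t in (0 : ℝ)..x, y t) * y x) := fun x hx ↦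
    mul_nonneg (Real.exp_nonneg _) (hy.exp_neg_primitive_mul_nonneg hx)
  have hint := integrableOn_Ioi_deriv_of_nonneg hcont
    (fun _ ↦ hy.hasDerivAt_exp_primitive) hderiv_nonneg hlim
  have hval := integral_Ioi_of_hasDerivAt_of_nonneg hcont
    (fun _ ↦ hy.hasDerivAt_exp_primitive) hderiv_nonneg hlim
  rw [← hy.integral_mul_setIntegral_Iic hq measurableSet_Ioi subset_rfl hint,
    intervalIntegral.integral_same, Real.exp_zero] at hval
  rw [← hval]
  refine setIntegral_congr_fun measurableSet_Ioi fun x hx ↦ ?_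
  simp only [intervalIntegral.integral_of_le hx.le, Ioi_inter_Iic]

end IsDecayingRiccatiSolution

/-! ### The substitution `x = I(z)` -/

/-- The change of variables `I(z) = ∫₀ᶻ exp (m u) du` of the half-line; for negative `z` the
interval integral makes it non-positive. -/
noncomputable def scale (m : ℝ → ℝ) (z : ℝ) : ℝ := ∫ u in (0 : ℝ)..z, Real.exp (m u)

@[simp]
lemma scale_zero (m : ℝ → ℝ) : scale m 0 = 0 := intervalIntegral.integral_same

lemma scale_nonpos {m : ℝ → ℝ} {z : ℝ} (hz : z ≤ 0) : scale m z ≤ 0 := by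
  rw [scale, intervalIntegral.integral_symm, neg_nonpos]
  exact intervalIntegral.integral_nonneg_of_forall hz fun _ ↦ (Real.exp_pos _).le

section Scale

variable {m : ℝ → ℝ} (hm : ContinuousOn m (Ici 0))
include hm

lemma intervalIntegrable_exp_of_continuousOn {z : ℝ} (hz : 0 ≤ z) :
    IntervalIntegrable (fun u ↦ Real.exp (m u)) volume 0 z :=
  (hm.rexp.mono Icc_subset_Ici_self).intervalIntegrable_of_Icc hz

lemma hasDerivAt_scale {z : ℝ} (hz : 0 < z) : HasDerivAt (scale m) (Real.exp (m z)) z := by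
  have hcont : ContinuousOn (fun u ↦ Real.exp (m u)) (Ioi 0) := hm.rexp.mono Ioi_subset_Ici_self
  exact intervalIntegral.integral_hasDerivAt_right (intervalIntegrable_exp_of_continuousOn hm hz.le)
    (hcont.stronglyMeasurableAtFilter isOpen_Ioi z hz) (hcont.continuousAt (Ioi_mem_nhds hz))

lemma continuousOn_scale : ContinuousOn (scale m) (Ici 0) :=
  continuousOn_primitive_Ici fun _ ↦ intervalIntegrable_exp_of_continuousOn hm

lemma strictMonoOn_scale : StrictMonoOn (scale m) (Ici 0) :=
  strictMonoOn_of_deriv_pos (convex_Ici 0) (continuousOn_scale hm) fun z hz ↦ by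
    rw [interior_Ici] at hz
    simpa only [(hasDerivAt_scale hm hz).deriv] using Real.exp_pos _

lemma scale_pos {z : ℝ} (hz : 0 < z) : 0 < scale m z := by
  simpa [scale] using strictMonoOn_scale hm self_mem_Ici hz.le hz

lemma image_scale_Ioi (hsurj : Ioi 0 ⊆ range (scale m)) : scale m '' Ioi 0 = Ioi 0 := by
  refine Subset.antisymm (image_subset_iff.2 fun _ ↦ scale_pos hm) fun x hx ↦ ?_
  obtain ⟨z, rfl⟩ := hsurj hx
  refine ⟨z, ?_, rfl⟩
  by_contra hz
  exact hx.not_ge (scale_nonpos (not_lt.1 hz))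

theorem integral_comp_scale_mul (f : ℝ → ℝ) {z : ℝ} (hz : 0 ≤ z) :
    ∫ u in (0 : ℝ)..z, f (scale m u) * Real.exp (m u) = ∫ x in (0 : ℝ)..scale m z, f x := by
  have h := intervalIntegral.integral_comp_mul_deriv_of_deriv_nonneg (g := f)
    ((continuousOn_scale hm).mono (uIcc_of_le hz ▸ Icc_subset_Ici_self))
    (fun u hu ↦ hasDerivAt_scale hm (min_eq_left hz ▸ hu.1)) (fun u _ ↦ (Real.exp_pos (m u)).le)
  simpa only [scale_zero, Function.comp_apply] using h

theorem integral_Ioi_comp_scale_mul (hsurj : Ioi 0 ⊆ range (scale m)) (f : ℝ → ℝ) :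
    ∫ z in Ioi 0, f (scale m z) * Real.exp (m z) = ∫ x in Ioi 0, f x := by
  have h := integral_image_eq_integral_deriv_smul_of_monotoneOn measurableSet_Ioi
    (fun z hz ↦ (hasDerivAt_scale hm hz).hasDerivWithinAt)
    ((strictMonoOn_scale hm).monotoneOn.mono Ioi_subset_Ici_self) f
  simpa only [image_scale_Ioi hm hsurj, smul_eq_mul, mul_comm] using h.symm

theorem mul_integral_comp_scale_eq (hsurj : Ioi 0 ⊆ range (scale m))
    {P q w B B' : ℝ → ℝ} {lam : ℝ}
    (hq : ∀ z, 0 < z → q (scale m z) = lam * (w z * Real.exp (-m z) ^ 2))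
    (hB : ∀ z, 0 < z → 0 ≤ B z) (hB' : ∀ z, 0 < z → B' (scale m z) = scale m (B z)) :
    lam * ∫ z in Ioi 0, w z * Real.exp (-(m z) - P (scale m z)) *
        ∫ u in (0 : ℝ)..B z, Real.exp (m u + 2 * P (scale m u)) =
      ∫ x in Ioi 0, q x * Real.exp (-P x) * ∫ s in (0 : ℝ)..B' x, Real.exp (2 * P s) := by
  rw [← integral_Ioi_comp_scale_mul hm hsurj fun x ↦ q x * Real.exp (-P x) *
    ∫ s in (0 : ℝ)..B' x, Real.exp (2 * P s), ← integral_const_mul]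
  refine setIntegral_congr_fun measurableSet_Ioi fun z hz ↦ ?_
  have h_inner : ∫ u in (0 : ℝ)..B z, Real.exp (m u + 2 * P (scale m u)) =
      ∫ s in (0 : ℝ)..B' (scale m z), Real.exp (2 * P s) := by
    rw [hB' z hz, ← integral_comp_scale_mul hm _ (hB z hz)]
    simp only [Real.exp_add, mul_comm]
  have h_cancel : Real.exp (-m z) * Real.exp (m z) = 1 := by
    rw [← Real.exp_add, neg_add_cancel, Real.exp_zero]
  simp only [h_inner, hq z hz]
  rw [sub_eq_add_neg, Real.exp_add]
  linear_combination (-lam * w z * Real.exp (-m z) * Real.exp (-P (scale m z)) *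
    ∫ s in (0 : ℝ)..B' (scale m z), Real.exp (2 * P s)) * h_cancel

end Scale

/-! ### Lévy–Khintchine exponents -/

lemma abs_exp_neg_sub_one_add_le {t : ℝ} (ht : 0 ≤ t) : |Real.exp (-t) - 1 + t| ≤ t ^ 2 := by
  have h_lower : 1 - t ≤ Real.exp (-t) := Real.one_sub_le_exp_neg t
  have h_upper : Real.exp (-t) ≤ (1 + t)⁻¹ := by
    rw [Real.exp_neg]
    exact inv_anti₀ (by linarith) (by linarith [Real.add_one_le_exp t])
  have h_inv : (1 + t)⁻¹ ≤ 1 - t + t ^ 2 := by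
    rw [inv_le_iff_one_le_mul₀ (by linarith)]
    nlinarith [pow_nonneg ht 3]
  exact abs_le.2 ⟨by nlinarith, by linarith⟩

lemma abs_exp_neg_sub_one_le {t : ℝ} (ht : 0 ≤ t) :
    |Real.exp (-t) - 1| ≤ 2 * t / (1 + t) := by
  have h_le_one : Real.exp (-t) ≤ 1 := Real.exp_le_one_iff.2 (neg_nonpos.2 ht)
  rw [abs_of_nonpos (by linarith), le_div_iff₀ (by linarith)]
  nlinarith [Real.one_sub_le_exp_neg t, Real.exp_pos (-t)]

/-- The integrand of the Lévy–Khintchine formula, with jumps `x < 1` compensated. It is meant for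
jumps `x > 0` only. -/
noncomputable def levyKernel (u x : ℝ) : ℝ :=
  Real.exp (-(u * x)) - 1 + (if x < 1 then u * x else 0)

lemma measurable_levyKernel : Measurable (Function.uncurry levyKernel) := by
  have h_ite : Measurable fun p : ℝ × ℝ ↦ if p.2 < 1 then p.1 * p.2 else 0 :=
    Measurable.ite (measurableSet_lt measurable_snd measurable_const) (by fun_prop) (by fun_prop)
  exact (show Measurable fun p : ℝ × ℝ ↦ Real.exp (-(p.1 * p.2)) - 1 by fun_prop).add h_ite

lemma norm_levyKernel_div_le_of_lt_one {u x : ℝ} (hu : 0 < u) (hx : 0 ≤ x) (hx1 : x < 1) :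
    ‖levyKernel u x / u‖ ≤ u * x ^ 2 := by
  rw [levyKernel, if_pos hx1, norm_div, Real.norm_eq_abs, Real.norm_of_nonneg hu.le,
    div_le_iff₀ hu]
  calc |Real.exp (-(u * x)) - 1 + u * x| ≤ (u * x) ^ 2 :=
        abs_exp_neg_sub_one_add_le (mul_nonneg hu.le hx)
    _ = u * x ^ 2 * u := by ring

lemma norm_levyKernel_div_le_of_one_le {u x : ℝ} (hu : 0 < u) (hx : 1 ≤ x) :
    ‖levyKernel u x / u‖ ≤ 2 * x / (1 + u * x) := by
  rw [levyKernel, if_neg hx.not_gt, add_zero, norm_div, Real.norm_eq_abs,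
    Real.norm_of_nonneg hu.le, div_le_iff₀ hu]
  calc |Real.exp (-(u * x)) - 1| ≤ 2 * (u * x) / (1 + u * x) :=
        abs_exp_neg_sub_one_le (by positivity)
    _ = 2 * x / (1 + u * x) * u := by ring

lemma continuousOn_two_mul_div_one_add_mul {x : ℝ} (hx : 0 ≤ x) :
    ContinuousOn (fun u ↦ 2 * x / (1 + u * x)) (Ici 0) :=
  continuousOn_const.div (by fun_prop) fun u hu ↦ by
    have := mul_nonneg (mem_Ici.1 hu) hx
    positivity

lemma integral_two_mul_div_one_add_mul {T x : ℝ} (hT : 0 ≤ T) (hx : 0 ≤ x) :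
    ∫ u in (0 : ℝ)..T, 2 * x / (1 + u * x) = 2 * Real.log (1 + T * x) := by
  have h_pos {u : ℝ} (hu : u ∈ uIcc 0 T) : 0 < 1 + u * x := by
    rw [uIcc_of_le hT] at hu
    have := mul_nonneg hu.1 hx
    positivity
  have h_deriv : ∀ u ∈ uIcc 0 T,
      HasDerivAt (fun u ↦ 2 * Real.log (1 + u * x)) (2 * x / (1 + u * x)) u := fun u hu ↦ by
    refine (((((hasDerivAt_id u).mul_const x).const_add 1).log (h_pos hu).ne').const_mul
      2).congr_deriv ?_
    simp only [id_eq]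
    ring
  rw [intervalIntegral.integral_eq_sub_of_hasDerivAt h_deriv
    (continuousOn_two_mul_div_one_add_mul hx |>.mono (uIcc_of_le hT ▸ Icc_subset_Ici_self)
      |>.intervalIntegrable)]
  simp

lemma log_one_add_mul_le {T x : ℝ} (hT : 0 ≤ T) (hx : 1 ≤ x) :
    Real.log (1 + T * x) ≤ Real.log (1 + T) + log⁺ x := by
  have hx0 : 0 < x := one_pos.trans_le hx
  rw [Real.posLog_eq_log (by rwa [abs_of_pos hx0]), ← Real.log_mul (by positivity) hx0.ne']
  exact Real.log_le_log (by positivity) (by linarith)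

/-- The weight whose integrability on `(0, ∞)` says that a Lévy measure has a finite logarithmic
moment at infinity. -/
noncomputable def levyWeight (x : ℝ) : ℝ := min 1 (x ^ 2) + log⁺ x

lemma levyWeight_pos {x : ℝ} (hx : 0 < x) : 0 < levyWeight x :=
  add_pos_of_pos_of_nonneg (lt_min one_pos (pow_pos hx 2)) Real.posLog_nonneg

theorem integrableOn_levyWeight {μ : Measure ℝ}
    (hμ_min : ∫⁻ x in Ioi 0, ENNReal.ofReal (min 1 (x ^ 2)) ∂μ < ⊤)
    (hμ_log : ∫⁻ x in Ioi 1, ENNReal.ofReal (Real.log x) ∂μ < ⊤) :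
    IntegrableOn levyWeight (Ioi 0) μ := by
  have h_min : IntegrableOn (fun x ↦ min 1 (x ^ 2)) (Ioi 0) μ := by
    refine ⟨by fun_prop, ?_⟩
    rwa [hasFiniteIntegral_iff_ofReal (.of_forall fun x ↦ le_min one_pos.le (sq_nonneg x))]
  have h_log : IntegrableOn log⁺ (Ioi 1) μ := by
    refine ⟨by fun_prop, ?_⟩
    rw [hasFiniteIntegral_iff_ofReal (.of_forall fun _ ↦ Real.posLog_nonneg)]
    refine hμ_log.trans_eq' (setLIntegral_congr_fun measurableSet_Ioi fun x hx ↦ ?_)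
    rw [Real.posLog_eq_log ((le_of_lt hx).trans (le_abs_self x))]
  have h_log_Ioi : IntegrableOn log⁺ (Ioi 0) μ :=
    h_log.of_forall_sdiff_eq_zero measurableSet_Ioi fun x hx ↦
      (Real.posLog_eq_zero_iff x).2 (abs_le.2 ⟨by linarith [hx.1.out], not_lt.1 hx.2⟩)
  exact h_min.add h_log_Ioi

lemma sigmaFinite_restrict_of_integrableOn_levyWeight {μ : Measure ℝ}
    (hμ : IntegrableOn levyWeight (Ioi 0) μ) : SigmaFinite (μ.restrict (Ioi 0)) :=
  sigmaFinite_of_integrable_of_ae_ne_zero hμ <|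
    (ae_restrict_mem measurableSet_Ioi).mono fun _ hx ↦ (levyWeight_pos hx).ne'

lemma exists_dominating_levyKernel_div {T x : ℝ} (hT : 0 ≤ T) (hx : 0 < x) :
    ∃ g : ℝ → ℝ, IntegrableOn g (Ioc 0 T) ∧ (∀ u ∈ Ioc 0 T, ‖levyKernel u x / u‖ ≤ g u) ∧
      ∫ u in Ioc 0 T, g u ≤ (T ^ 2 + 2 * Real.log (1 + T) + 2) * levyWeight x := by
  have h_log : 0 ≤ Real.log (1 + T) := Real.log_nonneg (by linarith)
  have h_posLog : 0 ≤ log⁺ x := Real.posLog_nonneg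
  rcases lt_or_ge x 1 with hx1 | hx1
  · refine ⟨fun _ ↦ T * x ^ 2, integrableOn_const measure_Ioc_lt_top.ne, fun u hu ↦ ?_, ?_⟩
    · exact (norm_levyKernel_div_le_of_lt_one hu.1 hx.le hx1).trans
        (mul_le_mul_of_nonneg_right hu.2 (sq_nonneg x))
    · have h_min : min 1 (x ^ 2) = x ^ 2 := min_eq_right (pow_le_one₀ hx.le hx1.le)
      calc ∫ _ in Ioc 0 T, T * x ^ 2 = T ^ 2 * x ^ 2 := by
            rw [setIntegral_const, Real.volume_real_Ioc_of_le hT, smul_eq_mul]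
            ring
        _ ≤ (T ^ 2 + 2 * Real.log (1 + T) + 2) * levyWeight x := by
          rw [levyWeight, h_min]
          gcongr <;> linarith
  · refine ⟨fun u ↦ 2 * x / (1 + u * x), ?_, fun u hu ↦
      norm_levyKernel_div_le_of_one_le hu.1 hx1, ?_⟩
    · exact ((continuousOn_two_mul_div_one_add_mul hx.le).mono
        Icc_subset_Ici_self).integrableOn_Icc.mono_set Ioc_subset_Icc_self
    · have h_min : min 1 (x ^ 2) = 1 := min_eq_left (one_le_pow₀ hx1)
      calc ∫ u in Ioc 0 T, 2 * x / (1 + u * x) = 2 * Real.log (1 + T * x) := by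
            rw [← intervalIntegral.integral_of_le hT, integral_two_mul_div_one_add_mul hT hx.le]
        _ ≤ 2 * (Real.log (1 + T) + log⁺ x) := by gcongr; exact log_one_add_mul_le hT hx1
        _ ≤ (T ^ 2 + 2 * Real.log (1 + T) + 2) * levyWeight x := by
          rw [levyWeight, h_min]
          nlinarith [sq_nonneg T, mul_nonneg (sq_nonneg T) h_posLog, mul_nonneg h_log h_posLog]

theorem integrable_levyKernel_div {T : ℝ} (hT : 0 ≤ T) {μ : Measure ℝ}
    (hμ : IntegrableOn levyWeight (Ioi 0) μ) :
    Integrable (fun p : ℝ × ℝ ↦ levyKernel p.1 p.2 / p.1)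
      ((volume.restrict (Ioc 0 T)).prod (μ.restrict (Ioi 0))) := by
  have := sigmaFinite_restrict_of_integrableOn_levyWeight hμ
  have h_meas : AEStronglyMeasurable (fun p : ℝ × ℝ ↦ levyKernel p.1 p.2 / p.1)
      ((volume.restrict (Ioc 0 T)).prod (μ.restrict (Ioi 0))) :=
    (measurable_levyKernel.div measurable_fst).aestronglyMeasurable
  refine (integrable_prod_iff' h_meas).2 ⟨?_, ?_⟩
  · filter_upwards [ae_restrict_mem measurableSet_Ioi] with x hx
    obtain ⟨g, hg, h_le, -⟩ := exists_dominating_levyKernel_div hT hx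
    exact hg.mono' ((measurable_levyKernel.div measurable_fst).comp
      measurable_prodMk_right).aestronglyMeasurable ((ae_restrict_mem measurableSet_Ioc).mono h_le)
  · refine (hμ.const_mul (T ^ 2 + 2 * Real.log (1 + T) + 2)).mono'
      h_meas.norm.prod_swap.integral_prod_right' ?_
    filter_upwards [ae_restrict_mem measurableSet_Ioi] with x hx
    obtain ⟨g, hg, h_le, h_int⟩ := exists_dominating_levyKernel_div hT hx
    rw [Real.norm_of_nonneg (integral_nonneg fun _ ↦ norm_nonneg _)]
    exact (integral_mono_of_nonneg (.of_forall fun _ ↦ norm_nonneg _) hg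
      ((ae_restrict_mem measurableSet_Ioc).mono h_le)).trans h_int

theorem integrableOn_integral_levyKernel_div {T : ℝ} (hT : 0 ≤ T) {μ : Measure ℝ}
    (hμ : IntegrableOn levyWeight (Ioi 0) μ) :
    IntegrableOn (fun u ↦ (∫ x in Ioi 0, levyKernel u x ∂μ) / u) (Ioc 0 T) := by
  have := sigmaFinite_restrict_of_integrableOn_levyWeight hμ
  simpa only [integral_div, IntegrableOn] using
    (integrable_levyKernel_div hT hμ).integral_prod_left

/-- The exponent `ψ` with linear coefficient `-b`, Gaussian coefficient `γ²` and Lévy measure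
`μ` on `(0, ∞)`. -/
noncomputable def laplaceExponent (b γ : ℝ) (μ : Measure ℝ) (u : ℝ) : ℝ :=
  -(b * u) + γ ^ 2 * u ^ 2 + ∫ x in Ioi (0 : ℝ), levyKernel u x ∂μ

theorem intervalIntegrable_laplaceExponent_div (b γ : ℝ) {c : ℝ} (hc : 0 < c) (σ : ℝ)
    {μ : Measure ℝ} (hμ : IntegrableOn levyWeight (Ioi 0) μ) {T : ℝ} (hT : 0 ≤ T) :
    IntervalIntegrable (fun u ↦ laplaceExponent b γ μ u / (c * u + σ ^ 2 * u ^ 2 / 2))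
      volume 0 T := by
  have h_div : IntervalIntegrable (fun u ↦ -b + γ ^ 2 * u +
      (∫ x in Ioi 0, levyKernel u x ∂μ) / u) volume 0 T :=
    (Continuous.intervalIntegrable (by fun_prop) 0 T).add <|
      (intervalIntegrable_iff_integrableOn_Ioc_of_le hT).2
        (integrableOn_integral_levyKernel_div hT hμ)
  have h_pos {u : ℝ} (hu : 0 ≤ u) : 0 < c + σ ^ 2 * u / 2 := by positivity
  have h_inv : ContinuousOn (fun u ↦ (c + σ ^ 2 * u / 2)⁻¹) (uIcc 0 T) := by
    rw [uIcc_of_le hT]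
    exact ContinuousOn.inv₀ (by fun_prop) fun u hu ↦ (h_pos hu.1).ne'
  refine (h_div.mul_continuousOn h_inv).congr fun u hu ↦ ?_
  have hu_pos : 0 < u := by
    rw [uIoc_of_le hT] at hu
    exact hu.1
  have := h_pos hu_pos.le
  simp only [laplaceExponent]
  field_simp

theorem continuousOn_integral_laplaceExponent_div (b γ : ℝ) {c : ℝ} (hc : 0 < c) (σ : ℝ)
    {μ : Measure ℝ} (hμ : IntegrableOn levyWeight (Ioi 0) μ) :
    ContinuousOn (fun l ↦ ∫ u in (0 : ℝ)..l, laplaceExponent b γ μ u /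
      (c * u + σ ^ 2 * u ^ 2 / 2)) (Ici 0) :=
  continuousOn_primitive_Ici fun _ ↦ intervalIntegrable_laplaceExponent_div b γ hc σ hμ

theorem stmt_19_general
    (ω m I Iinv r : ℝ → ℝ)
    (hω : ∀ z, 0 < z → 0 < ω z)
    (hm : ContinuousOn m (Ici 0))
    (hI : ∀ lam, I lam = ∫ u in (0 : ℝ)..lam, Real.exp (m u))
    (hIinv_left : ∀ x, 0 ≤ x → Iinv (I x) = x)
    (hIinv_right : ∀ z, 0 ≤ z → I (Iinv z) = z)
    (hr : ∀ z, r z = Real.exp (-(m (Iinv z))) / Real.sqrt (ω (Iinv z)))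
    (lam : ℝ) (hlam : 0 ≤ lam)
    (y : ℝ → ℝ)
    (hy : IsDecayingRiccatiSolution (fun x ↦ lam * r x ^ 2) y) :
    (∀ v : ℝ, 0 < v →
      lam * ∫ z in Ioi (0 : ℝ),
          (1 / ω z) * Real.exp (-(m z) - ∫ s in (0 : ℝ)..(I z), y s) *
            (∫ u in (0 : ℝ)..(min z v),
              Real.exp (m u + 2 * ∫ s in (0 : ℝ)..(I u), y s))
        = Real.exp (∫ s in (0 : ℝ)..(I v), y s) - 1) ∧
    (IntegrableOn y (Ioi 0) volume →
      1 + lam * ∫ z in Ioi (0 : ℝ),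
          (1 / ω z) * Real.exp (-(m z) - ∫ s in (0 : ℝ)..(I z), y s) *
            (∫ u in (0 : ℝ)..z,
              Real.exp (m u + 2 * ∫ s in (0 : ℝ)..(I u), y s))
        = Real.exp (∫ s in Ioi (0 : ℝ), y s)) := by
  obtain rfl : I = scale m := funext hI
  have hsurj : Ioi 0 ⊆ range (scale m) := fun x hx ↦ ⟨Iinv x, hIinv_right x (le_of_lt hx)⟩
  have hq_nonneg : ∀ x, 0 < x → 0 ≤ lam * r x ^ 2 := fun x _ ↦ mul_nonneg hlam (sq_nonneg _)
  have hq_scale : ∀ z, 0 < z → lam * r (scale m z) ^ 2 =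
      lam * (1 / ω z * Real.exp (-m z) ^ 2) := fun z hz ↦ by
    rw [hr, hIinv_left z hz.le, div_pow, Real.sq_sqrt (hω z hz).le, one_div_mul_eq_div]
  have h_subst {B B' : ℝ → ℝ} := mul_integral_comp_scale_eq hm hsurj (B := B) (B' := B')
    (q := fun x ↦ lam * r x ^ 2) (w := fun z ↦ 1 / ω z)
    (P := fun x ↦ ∫ s in (0 : ℝ)..x, y s) hq_scale
  refine ⟨fun v hv ↦ ?_, fun hy_int ↦ ?_⟩
  · exact (h_subst (B := (min · v)) (B' := (min · (scale m v))) (fun z hz ↦ le_min hz.le hv.le)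
      fun z hz ↦ ((strictMonoOn_scale hm).monotoneOn.map_min hz.le hv.le).symm).trans
        (hy.integral_mul_intervalIntegral_min hq_nonneg (scale_pos hm hv).le)
  · exact add_eq_of_eq_sub' ((h_subst (B := id) (B' := id) (fun z hz ↦ hz.le)
      fun _ _ ↦ rfl).trans (hy.integral_mul_intervalIntegral hq_nonneg hy_int))

/-- With y a non-negative C¹ solution of y′ = y² − λr² vanishing at ∞ and integrable at 0,
for every v > 0:
λ∫_0^∞ (1/ω(z)) exp{−m(z) − ∫_0^{I(z)} y} (∫_0^{z∧v} exp{m(u) + 2∫_0^{I(u)} y} du) dz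
= exp{∫_0^{I(v)} y} − 1; and if moreover ∫_0^∞ y < ∞, then
1 + λ∫_0^∞ (1/ω(z)) exp{−m(z) − ∫_0^{I(z)} y} (∫_0^z exp{m(u) + 2∫_0^{I(u)} y} du) dz
= exp{∫_0^∞ y}. -/
theorem stmt_19
    (b γ c σ : ℝ) (μ : Measure ℝ)
    (hγ : 0 ≤ γ) (hc : 0 < c) (hσ : 0 < σ)
    (hμ0 : μ (Iic 0) = 0)
    (hμ2 : ∫⁻ x in Ioi (0:ℝ), ENNReal.ofReal (min 1 (x ^ 2)) ∂μ < ⊤)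
    (hμlog : ∫⁻ x in Ioi (1:ℝ), ENNReal.ofReal (Real.log x) ∂μ < ⊤)
    (ψ ω m I Iinv r : ℝ → ℝ)
    (hψ : ∀ u, ψ u = -(b * u) + γ ^ 2 * u ^ 2 +
      ∫ x in Ioi (0:ℝ), (Real.exp (-(u * x)) - 1 + (if x < 1 then u * x else 0)) ∂μ)
    (hgen : ∃ ϑ : ℝ, 0 ≤ ϑ ∧ ∀ z, ϑ ≤ z → 0 < ψ z)
    (hω : ∀ z, ω z = c * z + σ ^ 2 * z ^ 2 / 2)
    (hm : ∀ lam, m lam = ∫ u in (0:ℝ)..lam, ψ u / ω u)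
    (hI : ∀ lam, I lam = ∫ u in (0:ℝ)..lam, Real.exp (m u))
    (hIinv_left : ∀ x, 0 ≤ x → Iinv (I x) = x)
    (hIinv_right : ∀ z, 0 ≤ z → I (Iinv z) = z)
    (hr : ∀ z, r z = Real.exp (-(m (Iinv z))) / Real.sqrt (ω (Iinv z)))
    (lam : ℝ) (hlam : 0 < lam)
    (y : ℝ → ℝ)
    (hy : ∀ z ∈ Ioi (0:ℝ), 0 ≤ y z ∧ HasDerivAt y ((y z) ^ 2 - lam * (r z) ^ 2) z)
    (hy0 : Filter.Tendsto y Filter.atTop (nhds 0))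
    (hyint : IntegrableOn y (Ioo 0 1) volume) :
    (∀ v : ℝ, 0 < v →
      lam * ∫ z in Ioi (0:ℝ),
          (1 / ω z) * Real.exp (-(m z) - ∫ s in (0:ℝ)..(I z), y s) *
            (∫ u in (0:ℝ)..(min z v),
              Real.exp (m u + 2 * ∫ s in (0:ℝ)..(I u), y s))
        = Real.exp (∫ s in (0:ℝ)..(I v), y s) - 1) ∧
    (IntegrableOn y (Ioi 0) volume →
      1 + lam * ∫ z in Ioi (0:ℝ),
          (1 / ω z) * Real.exp (-(m z) - ∫ s in (0:ℝ)..(I z), y s) *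
            (∫ u in (0:ℝ)..z,
              Real.exp (m u + 2 * ∫ s in (0:ℝ)..(I u), y s))
        = Real.exp (∫ s in Ioi (0:ℝ), y s)) := by
  obtain rfl : ψ = laplaceExponent b γ μ := funext hψ
  obtain rfl : ω = fun z ↦ c * z + σ ^ 2 * z ^ 2 / 2 := funext hω
  have hm_cont : ContinuousOn m (Ici 0) := funext hm ▸
    continuousOn_integral_laplaceExponent_div b γ hc σ (integrableOn_levyWeight hμ2 hμlog)
  exact stmt_19_general _ m I Iinv r (fun z hz ↦ by positivity) hm_cont hI hIinv_left hIinv_right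
    hr lam hlam.le y ⟨fun x hx ↦ (hy x hx).1, fun x hx ↦ (hy x hx).2, hy0, hyint⟩
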